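/- arXiv:1902.06404 — 2 statements merged into one kernel-verified Lean document; each statement's English description precedes it below -/
import Mathlib

section
/- In the two-state i.i.d. model with m(n) = ⌈c·n^{2+α}⌉ and l(n) = ⌈c'·n^{2+α}⌉ for some constants c > 0, c' > 0 and α > 0, and with Δ_n = n^{−(1+α/4)}, the empirical means X̄_u = (X_u(1)+⋯+X_u(m))/m and W̄_u = (W_u(1)+⋯+W_u(l))/l satisfy P(⋃_{u=2}^n {|X̄_u − W̄_1| ≤ Δ_n}) → 0 as n → ∞. Equivalently, since Ȳ_{Π(u)} = X̄_u, the anonymized empirical means of all users other than user 1 are, with probability tending to 1, all farther than Δ_n from user 1's training empirical mean W̄_1. -/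
open MeasureTheory ProbabilityTheory Filter
open scoped ENNReal NNReal

/-- Bernoulli measure on `Bool` with success probability `p`. -/
noncomputable def bern (p : ℝ) : Measure Bool :=
  ENNReal.ofReal p • Measure.dirac true + ENNReal.ofReal (1 - p) • Measure.dirac false

/-- Joint law of (parameters, actual traces, training traces) in the two-state i.i.d. model:
the parameters `p u` are i.i.d. with law `μP`, and conditionally on the parameters the
`n` actual traces (of length `m`) and training traces (of length `l`) consist of i.i.d.
`Bernoulli (p u)` samples, all mutually independent. -/
noncomputable def twoStateLaw (n m l : ℕ) (μP : Measure ℝ) :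
    Measure ((Fin n → ℝ) × (Fin n → Fin m → Bool) × (Fin n → Fin l → Bool)) :=
  (Measure.pi fun _ : Fin n => μP).bind fun p =>
    (Measure.dirac p).prod
      ((Measure.pi fun u : Fin n => Measure.pi fun _ : Fin m => bern (p u)).prod
        (Measure.pi fun u : Fin n => Measure.pi fun _ : Fin l => bern (p u)))

/-- Empirical mean of a Boolean sample. -/
noncomputable def empMean {m : ℕ} (x : Fin m → Bool) : ℝ :=
  (∑ k : Fin m, if x k then (1 : ℝ) else 0) / m

lemma bern_isProb {p : ℝ} (h0 : 0 ≤ p) (h1 : p ≤ 1) : IsProbabilityMeasure (bern p) := by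
  constructor
  simp only [bern, Measure.add_apply, Measure.smul_apply, measure_univ, smul_eq_mul, mul_one]
  rw [← ENNReal.ofReal_add h0 (by linarith)]
  simp

lemma bern_integral {p : ℝ} (h0 : 0 ≤ p) (h1 : p ≤ 1) :
    ∫ b, (if b then (1 : ℝ) else 0) ∂(bern p) = p := by
  have := bern_isProb h0 h1
  rw [bern, integral_add_measure, integral_smul_measure, integral_smul_measure]
  · simp [h0]
  · exact (Integrable.of_finite).smul_measure ENNReal.ofReal_ne_top
  · exact (Integrable.of_finite).smul_measure ENNReal.ofReal_ne_top

lemma bern_hoeffding {p : ℝ} (h0 : 0 ≤ p) (h1 : p ≤ 1) {m : ℕ} (hm : 0 < m) {t : ℝ}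
    (ht : 0 ≤ t) :
    (Measure.pi fun _ : Fin m => bern p) {x | t < |empMean x - p|} ≤
      ENNReal.ofReal (2 * Real.exp (-2 * (m * t ^ 2))) := by
  have := bern_isProb h0 h1
  set ν := Measure.pi fun _ : Fin m => bern p with hν
  let g : Bool → ℝ := fun b => (if b then (1 : ℝ) else 0) - p
  have hg : HasSubgaussianMGF g ((‖(1 : ℝ) - 0‖₊ / 2) ^ 2) (bern p) := by
    have := hasSubgaussianMGF_of_mem_Icc (μ := bern p) (a := 0) (b := 1)
      (X := fun b : Bool => if b then (1 : ℝ) else 0) (measurable_of_finite _).aemeasurable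
      (Eventually.of_forall (by intro b; cases b <;> simp))
    rwa [bern_integral h0 h1] at this
  have hgi : ∀ i : Fin m, HasSubgaussianMGF (fun x : Fin m → Bool => g (x i))
      ((‖(1 : ℝ) - 0‖₊ / 2) ^ 2) ν := by
    intro i
    have hmp := measurePreserving_eval (fun _ : Fin m => bern p) i
    refine HasSubgaussianMGF.of_map (Y := fun x : Fin m → Bool => x i) (X := g) 
      (measurable_pi_apply i).aemeasurable ?_
    have : Measure.map (fun x : Fin m → Bool => x i) (Measure.pi fun _ : Fin m => bern p) = bern p :=
      hmp.map_eq
    rw [hν, this]; exact hg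
  have hind : iIndepFun (fun (i : Fin m) (x : Fin m → Bool) => g (x i)) ν :=
    iIndepFun_pi (μ := fun _ : Fin m => bern p) (X := fun _ => g)
      (fun _ => (measurable_of_finite _).aemeasurable)
  have hind' : iIndepFun (fun (i : Fin m) (x : Fin m → Bool) => - g (x i)) ν :=
    iIndepFun_pi (μ := fun _ : Fin m => bern p) (X := fun _ b => - g b)
      (fun _ => (measurable_of_finite _).aemeasurable)
  have hm' : (0 : ℝ) < m := by exact_mod_cast hm
  have hε : 0 ≤ (m : ℝ) * t := by positivity
  have e : -((m : ℝ) * t) ^ 2 / (2 * ((∑ i : Fin m, ((‖(1 : ℝ) - 0‖₊ / 2) ^ 2) : ℝ≥0) : ℝ))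
      = -2 * (m * t ^ 2) := by
    simp
    field_simp
  have A := HasSubgaussianMGF.measure_sum_ge_le_of_iIndepFun hind (s := Finset.univ)
    (fun i _ => hgi i) hε
  have B := HasSubgaussianMGF.measure_sum_ge_le_of_iIndepFun hind' (s := Finset.univ)
    (fun i _ => (hgi i).neg) hε
  rw [e] at A B
  have hs : ∀ x : Fin m → Bool, ∑ i, g (x i) = m * (empMean x - p) := by
    intro x
    simp only [g, empMean, Finset.sum_sub_distrib, Finset.sum_const, Finset.card_univ,
      Fintype.card_fin, nsmul_eq_mul]
    field_simp
  have hsub : {x : Fin m → Bool | t < |empMean x - p|} ⊆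
      {x | (m : ℝ) * t ≤ ∑ i, g (x i)} ∪ {x | (m : ℝ) * t ≤ ∑ i, - g (x i)} := by
    intro x hx
    simp only [Set.mem_setOf_eq, Set.mem_union, Finset.sum_neg_distrib, hs] at hx ⊢
    rcases lt_abs.1 hx with h | h
    · left; nlinarith
    · right; nlinarith
  have C : ν.real {x : Fin m → Bool | t < |empMean x - p|} ≤ 2 * Real.exp (-2 * (m * t ^ 2)) := by
    refine (measureReal_mono hsub).trans ((measureReal_union_le _ _).trans ?_)
    linarith
  rw [← ofReal_measureReal]
  exact ENNReal.ofReal_le_ofReal C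

lemma density_le {f : ℝ → ℝ} {δ₁ δ₂ : ℝ} 
    {μP : Measure ℝ}
    (hμP : μP = volume.withDensity fun x => ENNReal.ofReal (f x))
    (hf0 : ∀ x ∉ Set.Ioo (0 : ℝ) 1, f x = 0)
    (hf : ∀ x ∈ Set.Ioo (0 : ℝ) 1, δ₁ < f x ∧ f x < δ₂) {s : Set ℝ} (hs : MeasurableSet s) :
    μP s ≤ ENNReal.ofReal δ₂ * volume s := by
  rw [hμP, withDensity_apply _ hs, ← setLIntegral_const]
  refine lintegral_mono fun x => ?_
  by_cases hx : x ∈ Set.Ioo (0 : ℝ) 1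
  · exact ENNReal.ofReal_le_ofReal (hf x hx).2.le
  · simp [hf0 x hx]

lemma density_ae {f : ℝ → ℝ} {μP : Measure ℝ}
    (hμP : μP = volume.withDensity fun x => ENNReal.ofReal (f x))
    (hf0 : ∀ x ∉ Set.Ioo (0 : ℝ) 1, f x = 0) : ∀ᵐ x ∂μP, x ∈ Set.Ioo (0 : ℝ) 1 := by
  rw [ae_iff]
  have : {a : ℝ | ¬ a ∈ Set.Ioo (0 : ℝ) 1} = (Set.Ioo (0 : ℝ) 1)ᶜ := rfl
  rw [this, hμP, withDensity_apply _ measurableSet_Ioo.compl,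
    setLIntegral_congr_fun (g := fun _ => 0) measurableSet_Ioo.compl]
  · simp
  · intro x hx
    simp [hf0 x hx]

lemma pair_close {f : ℝ → ℝ} {δ₁ δ₂ : ℝ} 
    {μP : Measure ℝ} [IsProbabilityMeasure μP]
    (hμP : μP = volume.withDensity fun x => ENNReal.ofReal (f x))
    (hf0 : ∀ x ∉ Set.Ioo (0 : ℝ) 1, f x = 0)
    (hf : ∀ x ∈ Set.Ioo (0 : ℝ) 1, δ₁ < f x ∧ f x < δ₂) {n : ℕ} {u v : Fin n} (huv : u ≠ v)
    (r : ℝ) :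
    (Measure.pi fun _ : Fin n => μP) {p | |p u - p v| ≤ r} ≤
      ENNReal.ofReal δ₂ * ENNReal.ofReal (2 * r) := by
  have hi : iIndepFun (fun (i : Fin n) (p : Fin n → ℝ) => p i) (Measure.pi fun _ : Fin n => μP) :=
    iIndepFun_pi (μ := fun _ : Fin n => μP) (X := fun _ => id) (fun _ => aemeasurable_id)
  have h := (hi.indepFun huv.symm).map_prod_eq_prod_map_map
    (measurable_pi_apply v).aemeasurable (measurable_pi_apply u).aemeasurable
  have e1 : ∀ i, Measure.map (fun p : Fin n → ℝ => p i) (Measure.pi fun _ : Fin n => μP) = μP := 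
    fun i => (measurePreserving_eval (fun _ : Fin n => μP) i).map_eq
  rw [e1, e1] at h
  have hS : MeasurableSet {q : ℝ × ℝ | |q.2 - q.1| ≤ r} :=
    measurableSet_le (by fun_prop) (by fun_prop)
  have : (Measure.pi fun _ : Fin n => μP) {p | |p u - p v| ≤ r} =
      (μP.prod μP) {q : ℝ × ℝ | |q.2 - q.1| ≤ r} := by
    rw [← h, Measure.map_apply (by fun_prop) hS]; rfl
  rw [this, Measure.prod_apply hS]
  calc _ ≤ ∫⁻ x, ENNReal.ofReal δ₂ * ENNReal.ofReal (2 * r) ∂μP := by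
        refine lintegral_mono fun x => ?_
        have e : Prod.mk x ⁻¹' {q : ℝ × ℝ | |q.2 - q.1| ≤ r} = Set.Icc (x - r) (x + r) := by
          ext y
          simp only [Set.mem_preimage, Set.mem_setOf_eq, Set.mem_Icc, abs_le]
          constructor <;> rintro ⟨h1, h2⟩ <;> constructor <;> linarith
        rw [e]
        refine (density_le hμP hf0 hf measurableSet_Icc).trans ?_
        rw [Real.volume_Icc]
        gcongr
        linarith
    _ = _ := by simp

lemma cond_bound {n m l : ℕ} (hm : 0 < m) (hl : 0 < l) (p : Fin n → ℝ)
    (hp : ∀ u, p u ∈ Set.Ioo (0 : ℝ) 1) (u v : Fin n) {t : ℝ} (ht : 0 ≤ t) :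
    ((Measure.pi fun u : Fin n => Measure.pi fun _ : Fin m => bern (p u)).prod
        (Measure.pi fun u : Fin n => Measure.pi fun _ : Fin l => bern (p u)))
      {z | |empMean (z.1 u) - empMean (z.2 v)| ≤ t} ≤
    Set.indicator {p : Fin n → ℝ | |p u - p v| ≤ 3 * t} 1 p +
      (ENNReal.ofReal (2 * Real.exp (-2 * (m * t ^ 2))) +
        ENNReal.ofReal (2 * Real.exp (-2 * (l * t ^ 2)))) := by
  have hpr : ∀ u, IsProbabilityMeasure (bern (p u)) := fun u => bern_isProb (hp u).1.le (hp u).2.le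
  by_cases hc : |p u - p v| ≤ 3 * t
  · rw [Set.indicator_of_mem (by exact hc)]
    exact prob_le_one.trans (by simp)
  set ν₁ := (Measure.pi fun u : Fin n => Measure.pi fun _ : Fin m => bern (p u)) with h₁
  set ν₂ := (Measure.pi fun u : Fin n => Measure.pi fun _ : Fin l => bern (p u)) with h₂
  rw [Set.indicator_of_notMem (by exact hc), zero_add]
  have hsub : {z : (Fin n → Fin m → Bool) × (Fin n → Fin l → Bool) |
      |empMean (z.1 u) - empMean (z.2 v)| ≤ t} ⊆
      ((fun z => z.1 u) ⁻¹' {x | t < |empMean x - p u|}) ∪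
      ((fun z => z.2 v) ⁻¹' {x | t < |empMean x - p v|}) := by
    intro z hz
    simp only [Set.mem_setOf_eq, Set.mem_union, Set.mem_preimage] at hz ⊢
    by_contra! hcon
    obtain ⟨a, b⟩ := hcon
    apply hc
    rw [abs_le] at *
    constructor <;> linarith [hz.1, hz.2, a.1, a.2, b.1, b.2]
  refine (measure_mono hsub).trans ((measure_union_le _ _).trans (add_le_add ?_ ?_))
  · have h1 : MeasurePreserving (fun z : (Fin n → Fin m → Bool) × (Fin n → Fin l → Bool) => z.1 u)
        (ν₁.prod ν₂) (Measure.pi fun _ : Fin m => bern (p u)) :=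
      (measurePreserving_eval (fun u : Fin n => Measure.pi fun _ : Fin m => bern (p u)) u).comp
        measurePreserving_fst
    rw [h1.measure_preimage (MeasurableSet.of_discrete).nullMeasurableSet]
    exact bern_hoeffding (hp u).1.le (hp u).2.le hm ht
  · have h1 : MeasurePreserving (fun z : (Fin n → Fin m → Bool) × (Fin n → Fin l → Bool) => z.2 v)
        (ν₁.prod ν₂) (Measure.pi fun _ : Fin l => bern (p v)) :=
      (measurePreserving_eval (fun u : Fin n => Measure.pi fun _ : Fin l => bern (p u)) v).comp
        measurePreserving_snd
    rw [h1.measure_preimage (MeasurableSet.of_discrete).nullMeasurableSet]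
    exact bern_hoeffding (hp v).1.le (hp v).2.le hl ht

lemma law_bound {f : ℝ → ℝ} {δ₁ δ₂ : ℝ} 
    {μP : Measure ℝ} [IsProbabilityMeasure μP]
    (hμP : μP = volume.withDensity fun x => ENNReal.ofReal (f x))
    (hf0 : ∀ x ∉ Set.Ioo (0 : ℝ) 1, f x = 0)
    (hf : ∀ x ∈ Set.Ioo (0 : ℝ) 1, δ₁ < f x ∧ f x < δ₂) {n m l : ℕ} (hm : 0 < m) (hl : 0 < l)
    {u v : Fin n} (huv : u ≠ v) {t : ℝ} (ht : 0 ≤ t) :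
    twoStateLaw n m l μP (Set.univ ×ˢ {z | |empMean (z.1 u) - empMean (z.2 v)| ≤ t}) ≤
      ENNReal.ofReal δ₂ * ENNReal.ofReal (2 * (3 * t)) +
      (ENNReal.ofReal (2 * Real.exp (-2 * (m * t ^ 2))) +
        ENNReal.ofReal (2 * Real.exp (-2 * (l * t ^ 2)))) := by
  have hae : ∀ᵐ p ∂(Measure.pi fun _ : Fin n => μP), ∀ u, p u ∈ Set.Ioo (0 : ℝ) 1 := by
    rw [ae_all_iff]
    intro u
    exact (measurePreserving_eval (fun _ : Fin n => μP) u).quasiMeasurePreserving.ae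
      (density_ae hμP hf0)
  refine (Measure.bind_apply_le _ (MeasurableSet.univ.prod MeasurableSet.of_discrete)).trans ?_
  have hS : MeasurableSet {p : Fin n → ℝ | |p u - p v| ≤ 3 * t} :=
    measurableSet_le (by fun_prop) (by fun_prop)
  calc _ ≤ ∫⁻ p, (Set.indicator {p : Fin n → ℝ | |p u - p v| ≤ 3 * t} 1 p +
      (ENNReal.ofReal (2 * Real.exp (-2 * (m * t ^ 2))) +
        ENNReal.ofReal (2 * Real.exp (-2 * (l * t ^ 2))))) ∂(Measure.pi fun _ : Fin n => μP) := by
        refine lintegral_mono_ae ?_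
        filter_upwards [hae] with p hp
        have hpr : ∀ u, IsProbabilityMeasure (bern (p u)) :=
          fun u => bern_isProb (hp u).1.le (hp u).2.le
        rw [Measure.prod_prod, measure_univ, one_mul]
        exact cond_bound hm hl p hp u v ht
    _ ≤ _ := by
        rw [lintegral_add_right _ measurable_const, lintegral_indicator_one hS]
        simp only [lintegral_const, measure_univ, mul_one]
        gcongr
        exact pair_close hμP hf0 hf huv _

lemma exp_lim {c α : ℝ} (hc : 0 < c) (hα : 0 < α) {m : ℕ → ℕ}
    (hm : ∀ n : ℕ, m n = ⌈c * (n : ℝ) ^ ((2 : ℝ) + α)⌉₊) :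
    Tendsto (fun n : ℕ => (n : ℝ) *
      (2 * Real.exp (-2 * (m n * ((n : ℝ) ^ (-(1 + α / 4))) ^ 2)))) atTop (nhds 0) := by
  have h1 : Tendsto (fun n : ℕ => (n : ℝ) ^ (α / 2)) atTop atTop :=
    (tendsto_rpow_atTop (by positivity)).comp tendsto_natCast_atTop_atTop
  have h2 := ((tendsto_rpow_mul_exp_neg_mul_atTop_nhds_zero (2 / α) (2 * c)
    (by positivity)).comp h1).const_mul 2
  rw [mul_zero] at h2
  refine squeeze_zero' (Eventually.of_forall fun n => by positivity) ?_ h2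
  filter_upwards [eventually_gt_atTop 0] with n hn
  have hn' : (0 : ℝ) < n := by exact_mod_cast hn
  simp only [Function.comp]
  rw [← Real.rpow_mul hn'.le, show α / 2 * (2 / α) = 1 by field_simp, Real.rpow_one]
  have hle : c * (n : ℝ) ^ ((2 : ℝ) + α) ≤ m n := by rw [hm]; exact Nat.le_ceil _
  have h3 : c * (n : ℝ) ^ (α / 2) ≤ m n * ((n : ℝ) ^ (-(1 + α / 4))) ^ 2 := by
    calc c * (n : ℝ) ^ (α / 2) = c * (n : ℝ) ^ ((2 : ℝ) + α) * ((n : ℝ) ^ (-(1 + α / 4))) ^ 2 := by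
          rw [← Real.rpow_natCast, ← Real.rpow_mul hn'.le, mul_assoc, ← Real.rpow_add hn']
          congr 2; push_cast; ring
      _ ≤ _ := by gcongr
  have : Real.exp (-2 * (m n * ((n : ℝ) ^ (-(1 + α / 4))) ^ 2)) ≤
      Real.exp (-(2 * c) * (n : ℝ) ^ (α / 2)) := Real.exp_le_exp.2 (by nlinarith)
  nlinarith

lemma lin_lim {α : ℝ} (δ₂ : ℝ) (hα : 0 < α) :
    Tendsto (fun n : ℕ => (n : ℝ) * (δ₂ * (2 * (3 * (n : ℝ) ^ (-(1 + α / 4)))))) atTop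
      (nhds 0) := by
  have h1 : Tendsto (fun n : ℕ => (n : ℝ) ^ (-(α / 4))) atTop (nhds 0) :=
    (tendsto_rpow_neg_atTop (by positivity)).comp tendsto_natCast_atTop_atTop
  have h2 := h1.const_mul (6 * δ₂)
  rw [mul_zero] at h2
  refine h2.congr' ?_
  filter_upwards [eventually_gt_atTop 0] with n hn
  have hn' : (0 : ℝ) < n := by exact_mod_cast hn
  have : (n : ℝ) ^ (-(α / 4)) = n * (n : ℝ) ^ (-(1 + α / 4)) := by
    rw [show -(α / 4) = 1 + (-(1 + α / 4)) by ring, Real.rpow_add hn', Real.rpow_one]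
  rw [this]; ring

/-- **Separation of the other users' empirical means from user 1's training mean, in the
two-state i.i.d. model.**  With `m n = ⌈c n^{2+α}⌉`, `l n = ⌈c' n^{2+α}⌉` and
`Δ_n = n^{-(1+α/4)}`, the empirical means satisfy
`P(⋃_{u=2}^n {|X̄_u − W̄_1| ≤ Δ_n}) → 0` as `n → ∞`.  Equivalently, since
`Ȳ_{Π(u)} = X̄_u`, with probability tending to `1` the anonymized empirical means of all
users other than user 1 are farther than `Δ_n` from user 1's training empirical mean. -/
theorem other_users_means_far_from_W1
    (f : ℝ → ℝ) (δ₁ δ₂ : ℝ) (hδ₁ : 0 < δ₁)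
    (μP : Measure ℝ) [IsProbabilityMeasure μP]
    (hμP : μP = volume.withDensity fun x => ENNReal.ofReal (f x))
    (hf0 : ∀ x ∉ Set.Ioo (0 : ℝ) 1, f x = 0)
    (hf : ∀ x ∈ Set.Ioo (0 : ℝ) 1, δ₁ < f x ∧ f x < δ₂)
    (m l : ℕ → ℕ) (c c' α : ℝ) (hc : 0 < c) (hc' : 0 < c') (hα : 0 < α)
    (hm : ∀ n : ℕ, m n = ⌈c * (n : ℝ) ^ ((2 : ℝ) + α)⌉₊)
    (hl : ∀ n : ℕ, l n = ⌈c' * (n : ℝ) ^ ((2 : ℝ) + α)⌉₊)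
    (Ω : ℕ → Type) (mΩ : ∀ n, MeasurableSpace (Ω n))
    (μ : ∀ n, Measure (Ω n)) (hμ : ∀ n, IsProbabilityMeasure (μ n))
    (P : ∀ n, Ω n → Fin n → ℝ)
    (X : ∀ n, Ω n → Fin n → Fin (m n) → Bool)
    (W : ∀ n, Ω n → Fin n → Fin (l n) → Bool)
    (hP : ∀ n, Measurable (P n)) (hX : ∀ n, Measurable (X n))
    (hW : ∀ n, Measurable (W n))
    (hlaw : ∀ n, Measure.map (fun ω => (P n ω, X n ω, W n ω)) (μ n) =
      twoStateLaw n (m n) (l n) μP) :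
    Tendsto (fun n =>
        (μ n {ω | ∃ (hn : 0 < n) (u : Fin n), u ≠ ⟨0, hn⟩ ∧
            |empMean (X n ω u) - empMean (W n ω ⟨0, hn⟩)| ≤
              (n : ℝ) ^ (-(1 + α / 4))}).toReal)
      atTop (nhds 0) := by
  have hδ₂ : 0 < δ₂ := by
    have := hf (1 / 2) (by norm_num)
    linarith [this.1, this.2]
  have L := ((lin_lim δ₂ hα).add ((exp_lim hc hα hm).add (exp_lim hc' hα hl)))
  simp only [add_zero] at L
  refine squeeze_zero' (Eventually.of_forall fun n => ENNReal.toReal_nonneg) ?_ L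
  filter_upwards [eventually_gt_atTop 0] with n hn
  have hn' : (0 : ℝ) < n := by exact_mod_cast hn
  set t : ℝ := (n : ℝ) ^ (-(1 + α / 4)) with htdef
  have ht : 0 ≤ t := by positivity
  have hmn : 0 < m n := by rw [hm, Nat.ceil_pos]; positivity
  have hln : 0 < l n := by rw [hl, Nat.ceil_pos]; positivity
  set v : Fin n := ⟨0, hn⟩ with hv
  set B : ℝ := δ₂ * (2 * (3 * t)) + (2 * Real.exp (-2 * (m n * t ^ 2)) +
    2 * Real.exp (-2 * (l n * t ^ 2))) with hB
  have hB0 : 0 ≤ B := by positivity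
  have hbd : ∀ u : Fin n, u ≠ v →
      μ n {ω | |empMean (X n ω u) - empMean (W n ω v)| ≤ t} ≤ ENNReal.ofReal B := by
    intro u hu
    have h := law_bound hμP hf0 hf hmn hln hu ht
    rw [← hlaw n, Measure.map_apply ((hP n).prodMk ((hX n).prodMk (hW n)))
      (MeasurableSet.univ.prod MeasurableSet.of_discrete)] at h
    rw [hB, ENNReal.ofReal_add (by positivity) (by positivity),
      ENNReal.ofReal_add (by positivity) (by positivity), ENNReal.ofReal_mul hδ₂.le]
    refine le_trans (measure_mono ?_) h
    intro ω hω
    exact ⟨trivial, hω⟩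
  have hsub : {ω | ∃ (hn : 0 < n) (u : Fin n), u ≠ ⟨0, hn⟩ ∧
      |empMean (X n ω u) - empMean (W n ω ⟨0, hn⟩)| ≤ t} ⊆
      ⋃ u ∈ Finset.univ.filter (fun u : Fin n => u ≠ v),
        {ω | |empMean (X n ω u) - empMean (W n ω v)| ≤ t} := by
    rintro ω ⟨_, u, hu, h⟩
    simp only [Set.mem_iUnion]
    exact ⟨u, by simpa using hu, h⟩
  have hfin : μ n {ω | ∃ (hn : 0 < n) (u : Fin n), u ≠ ⟨0, hn⟩ ∧
      |empMean (X n ω u) - empMean (W n ω ⟨0, hn⟩)| ≤ t} ≤ ENNReal.ofReal (n * B) := by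
    refine (measure_mono hsub).trans ((measure_biUnion_finset_le _ _).trans ?_)
    calc _ ≤ ∑ u ∈ Finset.univ.filter (fun u : Fin n => u ≠ v), ENNReal.ofReal B :=
          Finset.sum_le_sum fun u hu => hbd u (by simpa using hu)
      _ ≤ ∑ u : Fin n, ENNReal.ofReal B :=
          Finset.sum_le_sum_of_subset (Finset.filter_subset _ _)
      _ = _ := by
          rw [ENNReal.ofReal_mul hn'.le]
          simp
  refine (ENNReal.toReal_le_of_le_ofReal (by positivity) hfin).trans (le_of_eq ?_)
  rw [hB]; ring
end

section
/- In the two-state i.i.d. model with m(n) = ⌈c·n^{2+α}⌉ and l(n) = ⌈c'·n^{2+α}⌉ for some constants c > 0, c' > 0 and α > 0, and with Δ_n = n^{−(1+α/4)}, the empirical means X̄_1 = (X_1(1)+⋯+X_1(m))/m and W̄_1 = (W_1(1)+⋯+W_1(l))/l satisfy P(|X̄_1 − W̄_1| ≤ Δ_n) → 1 as n → ∞. -/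
open MeasureTheory ProbabilityTheory Filter
open scoped ENNReal NNReal

lemma bern_prob (p : ℝ) (hp : p ∈ Set.Icc (0 : ℝ) 1) : IsProbabilityMeasure (bern p) := by
  constructor
  simp only [bern, Measure.add_apply, Measure.smul_apply, measure_univ, smul_eq_mul, mul_one]
  rw [← ENNReal.ofReal_add hp.1 (by linarith [hp.2])]
  simp

/-- Chebyshev bound for the empirical mean. -/
lemma cheb (N : ℕ) (hN : 0 < N) (p ε : ℝ) (hp : p ∈ Set.Icc (0 : ℝ) 1) (hε : 0 < ε) :
    (Measure.pi fun _ : Fin N => bern p) {x | ε ≤ |empMean x - p|} ≤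
      ENNReal.ofReal (1 / (4 * N * ε ^ 2)) := by
  have := bern_prob p hp
  have hN' : (0 : ℝ) < N := by exact_mod_cast hN
  let g : Bool → ℝ := fun b => if b then 1 else 0
  have hg : ∀ b, g b ∈ Set.Icc (0 : ℝ) 1 := by intro b; cases b <;> simp [g]
  have hgm : Measurable g := measurable_of_finite g
  have hgL : MemLp g 2 (bern p) := MemLp.of_bound hgm.aestronglyMeasurable 1
    (Eventually.of_forall fun b => by cases b <;> simp [g])
  have hgi : ∫ b, g b ∂(bern p) = p := by
    rw [bern, integral_add_measure, integral_smul_measure, integral_smul_measure,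
      integral_dirac, integral_dirac]
    · simp [g, ENNReal.toReal_ofReal hp.1]
    · exact (integrable_dirac (by simp)).smul_measure (by simp)
    · exact (integrable_dirac (by simp)).smul_measure (by simp)
  have hgv : variance g (bern p) ≤ 1 / 4 := by
    have := variance_le_sq_of_bounded (μ := bern p) (Eventually.of_forall hg) hgm.aemeasurable
    norm_num at this ⊢
    exact this
  let ν := Measure.pi fun _ : Fin N => bern p
  let S : (Fin N → Bool) → ℝ := ∑ k : Fin N, fun x => g (x k)
  have hYL : ∀ k : Fin N, MemLp (fun x : Fin N → Bool => g (x k)) 2 ν := fun k =>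
    hgL.comp_measurePreserving (measurePreserving_eval (fun _ : Fin N => bern p) k)
  have hSL : MemLp S 2 ν := memLp_finsetSum' _ fun k _ => hYL k
  have hSv : variance S ν ≤ N / 4 := by
    have h := variance_sum_pi (μ := fun _ : Fin N => bern p) (X := fun _ => g) (fun _ => hgL)
    change variance S ν = _ at h
    rw [h]
    calc _ ≤ ∑ k : Fin N, (1 / 4 : ℝ) := Finset.sum_le_sum fun k _ => hgv
      _ = N / 4 := by simp; ring
  have hSi : ∫ x, S x ∂ν = N * p := by
    have : ∀ x, S x = ∑ k : Fin N, g (x k) := fun x => by simp [S]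
    simp_rw [this]
    rw [integral_finsetSum _ fun k _ => (hYL k).integrable (by norm_num)]
    have h2 : ∀ k : Fin N, ∫ x, g (x k) ∂ν = p := fun k => by
      rw [← hgi]
      exact integral_comp_eval (μ := fun _ : Fin N => bern p) hgm.aestronglyMeasurable
    simp [h2]
  have hch := meas_ge_le_variance_div_sq hSL (mul_pos hN' hε)
  rw [hSi] at hch
  have hset : {x : Fin N → Bool | ε ≤ |empMean x - p|} = {x | N * ε ≤ |S x - N * p|} := by
    ext x
    have h1 : S x - N * p = N * (empMean x - p) := by
      simp only [S, empMean, g, Finset.sum_apply]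
      field_simp
    simp only [Set.mem_ofPred_eq, h1, abs_mul, abs_of_pos hN']
    exact (mul_le_mul_iff_right₀ hN').symm
  rw [hset]
  refine hch.trans (ENNReal.ofReal_le_ofReal ?_)
  calc variance S ν / (N * ε) ^ 2 ≤ (N / 4) / (N * ε) ^ 2 := by gcongr
    _ = _ := by field_simp

lemma kernel_bound (n m l : ℕ) (hm : 0 < m) (hl : 0 < l) (i : Fin n) (p : Fin n → ℝ)
    (hp : ∀ u, p u ∈ Set.Icc (0 : ℝ) 1) (Δ : ℝ) (hΔ : 0 < Δ) :
    ((Measure.dirac p).prod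
      ((Measure.pi fun u : Fin n => Measure.pi fun _ : Fin m => bern (p u)).prod
        (Measure.pi fun u : Fin n => Measure.pi fun _ : Fin l => bern (p u))))
      {z | ¬ |empMean (z.2.1 i) - empMean (z.2.2 i)| ≤ Δ} ≤
      ENNReal.ofReal (1 / (m * Δ ^ 2)) + ENNReal.ofReal (1 / (l * Δ ^ 2)) := by
  have := fun u => bern_prob (p u) (hp u)
  set A := Measure.pi fun u : Fin n => Measure.pi fun _ : Fin m => bern (p u) with hA
  set B := Measure.pi fun u : Fin n => Measure.pi fun _ : Fin l => bern (p u) with hB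
  have h1 : MeasurePreserving
      (fun z : (Fin n → ℝ) × (Fin n → Fin m → Bool) × (Fin n → Fin l → Bool) => z.2.1 i)
      ((Measure.dirac p).prod (A.prod B)) (Measure.pi fun _ : Fin m => bern (p i)) :=
    (measurePreserving_eval (fun u : Fin n => Measure.pi fun _ : Fin m => bern (p u)) i).comp
      (measurePreserving_fst.comp measurePreserving_snd)
  have h2 : MeasurePreserving
      (fun z : (Fin n → ℝ) × (Fin n → Fin m → Bool) × (Fin n → Fin l → Bool) => z.2.2 i)
      ((Measure.dirac p).prod (A.prod B)) (Measure.pi fun _ : Fin l => bern (p i)) :=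
    (measurePreserving_eval (fun u : Fin n => Measure.pi fun _ : Fin l => bern (p u)) i).comp
      (measurePreserving_snd.comp measurePreserving_snd)
  have c1 := cheb m hm (p i) (Δ / 2) (hp i) (by linarith)
  have c2 := cheb l hl (p i) (Δ / 2) (hp i) (by linarith)
  rw [← h1.measure_preimage (Set.toFinite _).measurableSet.nullMeasurableSet] at c1
  rw [← h2.measure_preimage (Set.toFinite _).measurableSet.nullMeasurableSet] at c2
  have e : ∀ N : ℕ, 1 / (4 * (N : ℝ) * (Δ / 2) ^ 2) = 1 / (N * Δ ^ 2) := fun N => by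
    congr 1; ring
  rw [e] at c1 c2
  refine le_trans (measure_mono ?_) ((measure_union_le _ _).trans (add_le_add c1 c2))
  intro z hz
  simp only [Set.mem_ofPred_eq, not_le, Set.mem_union, Set.mem_preimage] at hz ⊢
  by_contra hcon
  push Not at hcon
  have := abs_sub_le (empMean (z.2.1 i)) (p i) (empMean (z.2.2 i))
  rw [abs_sub_comm (p i)] at this
  linarith [hcon.1, hcon.2]

lemma law_bound_s12 (n m l : ℕ) (hm : 0 < m) (hl : 0 < l) (i : Fin n) (μP : Measure ℝ)
    [IsProbabilityMeasure μP] (hμ : ∀ᵐ x ∂μP, x ∈ Set.Icc (0 : ℝ) 1)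
    (Δ : ℝ) (hΔ : 0 < Δ) (h0 : twoStateLaw n m l μP ≠ 0)
    (hB : MeasurableSet {z : (Fin n → ℝ) × (Fin n → Fin m → Bool) × (Fin n → Fin l → Bool) |
      ¬ |empMean (z.2.1 i) - empMean (z.2.2 i)| ≤ Δ}) :
    twoStateLaw n m l μP {z | ¬ |empMean (z.2.1 i) - empMean (z.2.2 i)| ≤ Δ} ≤
      ENNReal.ofReal (1 / (m * Δ ^ 2)) + ENNReal.ofReal (1 / (l * Δ ^ 2)) := by
  unfold twoStateLaw at h0 ⊢
  have hae : AEMeasurable (fun p : Fin n → ℝ => (Measure.dirac p).prod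
      ((Measure.pi fun u : Fin n => Measure.pi fun _ : Fin m => bern (p u)).prod
        (Measure.pi fun u : Fin n => Measure.pi fun _ : Fin l => bern (p u))))
      (Measure.pi fun _ : Fin n => μP) := by
    by_contra hcon
    apply h0
    rw [Measure.bind, Measure.map_of_not_aemeasurable hcon, Measure.join_zero]
  rw [Measure.bind_apply hB hae]
  have hall : ∀ᵐ p ∂(Measure.pi fun _ : Fin n => μP), ∀ u, p u ∈ Set.Icc (0 : ℝ) 1 := by
    rw [ae_all_iff]
    intro u
    exact (Measure.quasiMeasurePreserving_eval (fun _ : Fin n => μP) u).ae hμ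
  refine (lintegral_mono_ae (hall.mono fun p hp =>
    kernel_bound n m l hm hl i p hp Δ hΔ)).trans ?_
  simp

/-- **Closeness of user 1's empirical means in the two-state i.i.d. model.**  With
`m n = ⌈c n^{2+α}⌉`, `l n = ⌈c' n^{2+α}⌉` and `Δ_n = n^{-(1+α/4)}`, the empirical means
satisfy `P(|X̄_1 − W̄_1| ≤ Δ_n) → 1` as `n → ∞`.  (Since `Y_{Π(1)} = X_1` under
anonymization, `X̄_1` is the anonymized empirical mean `Ȳ_{Π(1)}` of user 1.) -/
theorem user1_mean_close_to_W1
    (f : ℝ → ℝ) (δ₁ δ₂ : ℝ) (hδ₁ : 0 < δ₁)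
    (μP : Measure ℝ) [IsProbabilityMeasure μP]
    (hμP : μP = volume.withDensity fun x => ENNReal.ofReal (f x))
    (hf0 : ∀ x ∉ Set.Ioo (0 : ℝ) 1, f x = 0)
    (hf : ∀ x ∈ Set.Ioo (0 : ℝ) 1, δ₁ < f x ∧ f x < δ₂)
    (m l : ℕ → ℕ) (c c' α : ℝ) (hc : 0 < c) (hc' : 0 < c') (hα : 0 < α)
    (hm : ∀ n : ℕ, m n = ⌈c * (n : ℝ) ^ ((2 : ℝ) + α)⌉₊)
    (hl : ∀ n : ℕ, l n = ⌈c' * (n : ℝ) ^ ((2 : ℝ) + α)⌉₊)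
    (Ω : ℕ → Type) (mΩ : ∀ n, MeasurableSpace (Ω n))
    (μ : ∀ n, Measure (Ω n)) (hμ : ∀ n, IsProbabilityMeasure (μ n))
    (P : ∀ n, Ω n → Fin n → ℝ)
    (X : ∀ n, Ω n → Fin n → Fin (m n) → Bool)
    (W : ∀ n, Ω n → Fin n → Fin (l n) → Bool)
    (hP : ∀ n, Measurable (P n)) (hX : ∀ n, Measurable (X n))
    (hW : ∀ n, Measurable (W n))
    (hlaw : ∀ n, Measure.map (fun ω => (P n ω, X n ω, W n ω)) (μ n) =
      twoStateLaw n (m n) (l n) μP) :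
    Tendsto (fun n =>
        (μ n {ω | ∀ hn : 0 < n,
            |empMean (X n ω ⟨0, hn⟩) - empMean (W n ω ⟨0, hn⟩)| ≤
              (n : ℝ) ^ (-(1 + α / 4))}).toReal)
      atTop (nhds 1) := by
  have := hμ
  have hsupp : ∀ᵐ x ∂μP, x ∈ Set.Icc (0 : ℝ) 1 := by
    have : μP (Set.Ioo (0 : ℝ) 1)ᶜ = 0 := by
      rw [hμP, withDensity_apply _ measurableSet_Ioo.compl]
      rw [setLIntegral_congr_fun (g := fun _ => 0) measurableSet_Ioo.compl
        (fun x hx => by simp [hf0 x hx])]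
      simp
    have h2 : ∀ᵐ x ∂μP, x ∈ Set.Ioo (0 : ℝ) 1 := this
    exact h2.mono fun x hx => Set.Ioo_subset_Icc_self hx
  have hceil : ∀ (a : ℝ), 0 < a → ∀ n : ℕ, 0 < n → ∀ N : ℕ, N = ⌈a * (n : ℝ) ^ ((2 : ℝ) + α)⌉₊ →
      0 < N ∧ 1 / ((N : ℝ) * ((n : ℝ) ^ (-(1 + α / 4))) ^ 2) ≤ 1 / a * (n : ℝ) ^ (-(α / 2)) := by
    intro a ha n hn N hN
    have hn' : (0 : ℝ) < n := by exact_mod_cast hn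
    have h1 : a * (n : ℝ) ^ ((2 : ℝ) + α) ≤ N := by rw [hN]; exact Nat.le_ceil _
    have h2 : 0 < a * (n : ℝ) ^ ((2 : ℝ) + α) := by positivity
    refine ⟨by exact_mod_cast h2.trans_le h1, ?_⟩
    calc _ ≤ 1 / ((a * (n : ℝ) ^ ((2 : ℝ) + α)) * ((n : ℝ) ^ (-(1 + α / 4))) ^ 2) := by gcongr
      _ = 1 / (a * (n : ℝ) ^ (α / 2)) := by
        congr 1
        rw [← Real.rpow_natCast, ← Real.rpow_mul hn'.le, mul_assoc, ← Real.rpow_add hn']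
        congr 2
        push_cast
        ring
      _ = _ := by
        rw [Real.rpow_neg hn'.le]
        field_simp
  have key : ∀ n : ℕ, 0 < n → 1 - (1 / c + 1 / c') * (n : ℝ) ^ (-(α / 2)) ≤
      (μ n {ω | ∀ hn : 0 < n,
            |empMean (X n ω ⟨0, hn⟩) - empMean (W n ω ⟨0, hn⟩)| ≤
              (n : ℝ) ^ (-(1 + α / 4))}).toReal := by
    intro n hn
    have hn' : (0 : ℝ) < n := by exact_mod_cast hn
    obtain ⟨m0, mb⟩ := hceil c hc n hn (m n) (hm n)
    obtain ⟨l0, lb⟩ := hceil c' hc' n hn (l n) (hl n)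
    have hmeas : Measurable (fun ω => (P n ω, X n ω, W n ω)) :=
      (hP n).prodMk ((hX n).prodMk (hW n))
    set Δ := (n : ℝ) ^ (-(1 + α / 4)) with hΔ
    have hΔ0 : 0 < Δ := Real.rpow_pos_of_pos hn' _
    have hme : ∀ N : ℕ, Measurable (empMean (m := N)) := fun N => measurable_of_finite _
    have hB : MeasurableSet
        {z : (Fin n → ℝ) × (Fin n → Fin (m n) → Bool) × (Fin n → Fin (l n) → Bool) |
        ¬ |empMean (z.2.1 ⟨0, hn⟩) - empMean (z.2.2 ⟨0, hn⟩)| ≤ Δ} := by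
      have hd : Measurable
          (fun z : (Fin n → ℝ) × (Fin n → Fin (m n) → Bool) × (Fin n → Fin (l n) → Bool) =>
            |empMean (z.2.1 ⟨0, hn⟩) - empMean (z.2.2 ⟨0, hn⟩)|) := by
        refine _root_.measurable_abs.comp (Measurable.sub ?_ ?_)
        · exact (hme _).comp ((measurable_pi_apply _).comp (measurable_fst.comp measurable_snd))
        · exact (hme _).comp ((measurable_pi_apply _).comp (measurable_snd.comp measurable_snd))
      exact (measurableSet_le hd (measurable_const (a := Δ))).compl
    have h0 : twoStateLaw n (m n) (l n) μP ≠ 0 := by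
      rw [← hlaw n]
      have := Measure.isProbabilityMeasure_map (μ := μ n) hmeas.aemeasurable
      exact IsProbabilityMeasure.ne_zero _
    have hb := law_bound_s12 n (m n) (l n) m0 l0 ⟨0, hn⟩ μP hsupp Δ hΔ0 h0 hB
    rw [← hlaw n, Measure.map_apply hmeas hB,
      ← ENNReal.ofReal_add (by positivity) (by positivity)] at hb
    have hG : {ω | ∀ hn : 0 < n,
            |empMean (X n ω ⟨0, hn⟩) - empMean (W n ω ⟨0, hn⟩)| ≤ Δ} =
        ((fun ω => (P n ω, X n ω, W n ω)) ⁻¹' {z |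
          ¬ |empMean (z.2.1 ⟨0, hn⟩) - empMean (z.2.2 ⟨0, hn⟩)| ≤ Δ})ᶜ := by
      ext ω
      simp [hn]
    rw [hG]
    change _ ≤ (μ n).real _
    rw [probReal_compl_eq_one_sub (hmeas hB)]
    have := ENNReal.toReal_le_of_le_ofReal (by positivity) hb
    change (μ n).real _ ≤ _ at this
    linarith
  have hlim : Tendsto (fun n : ℕ => 1 - (1 / c + 1 / c') * (n : ℝ) ^ (-(α / 2))) atTop
      (nhds 1) := by
    have h := ((tendsto_rpow_neg_atTop (half_pos hα)).comp
      tendsto_natCast_atTop_atTop).const_mul (1 / c + 1 / c')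
    simpa using h.const_sub 1
  refine tendsto_of_tendsto_of_tendsto_of_le_of_le' hlim tendsto_const_nhds
    ((eventually_gt_atTop 0).mono key) (Eventually.of_forall fun n => ?_)
  exact measureReal_le_one
end
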